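/- arXiv:1602.05661 — 2 statements merged into one kernel-verified Lean document; each statement's English description precedes it below -/
import Mathlib

section
/- Let g^1, …, g^k : R^l → R be continuously differentiable functions and U := {u ∈ R^l : g^i(u) ≤ 0, i = 1, …, k}, and for u ∈ U set I[u] := {i : g^i(u) = 0}. Assume the linearly independent constraint qualification (LICQ) holds at every u in the boundary of U, i.e. the gradients {∇g^i(u) : i ∈ I[u]} are linearly independent. Then for every u ∈ U the adjacent cone of U at u is T_U(u) = {v ∈ R^l : ⟨∇g^i(u), v⟩ ≤ 0 for all i ∈ I[u]}. -/
/-!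
A constraint active at `u` attains its maximum over `U` there, so Fermat's rule along tangent
directions puts every adjacent direction in the linearized cone
`{v | ∀ i ∈ I[u], ⟪∇g i (u), v⟫ ≤ 0}`.

Conversely, a direction along which every active constraint strictly decreases to first order is
feasible, hence adjacent. At a boundary point, linear independence of the active gradients yields
one such direction `w`; if `v` is in the linearized cone, then `v + ε w` is such a direction for
every `ε > 0`, and `v` is adjacent because the adjacent cone is closed. At an interior point every
direction is adjacent.
-/

open Filter Set
open scoped RealInnerProductSpace

/-- The adjacent cone of a set `K` at a point `x`:
`T_K(x) := {v : lim_{h→0⁺} dist(x+hv, K)/h = 0}`. -/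
def adjacentCone {X : Type*} [NormedAddCommGroup X] [NormedSpace ℝ X]
    (K : Set X) (x : X) : Set X :=
  {v | Tendsto (fun h : ℝ => Metric.infDist (x + h • v) K / h)
        (nhdsWithin 0 (Set.Ioi 0)) (nhds 0)}

open scoped Topology

lemma tendsto_add_smul_nhdsGT_zero {X : Type*} [AddCommGroup X] [Module ℝ X] [TopologicalSpace X]
    [ContinuousAdd X] [ContinuousSMul ℝ X] (x v : X) :
    Tendsto (fun h : ℝ => x + h • v) (𝓝[>] 0) (𝓝 x) := by
  have hcont : Continuous fun h : ℝ => x + h • v := by fun_prop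
  exact tendsto_nhdsWithin_of_tendsto_nhds (hcont.tendsto' 0 x (by rw [zero_smul, add_zero]))

section AdjacentCone

variable {X : Type*} [NormedAddCommGroup X] [NormedSpace ℝ X] {K : Set X} {x v : X}

lemma mem_adjacentCone_iff_eventually_lt :
    v ∈ adjacentCone K x ↔
      ∀ ε > 0, ∀ᶠ h : ℝ in 𝓝[>] 0, Metric.infDist (x + h • v) K / h < ε := by
  refine Metric.tendsto_nhds.trans <| forall₂_congr fun ε _ => eventually_congr ?_
  filter_upwards [self_mem_nhdsWithin] with h (hpos : 0 < h)
  rw [dist_zero_right, Real.norm_of_nonneg (div_nonneg Metric.infDist_nonneg hpos.le)]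

lemma infDist_add_smul_div_le (K : Set X) (x v w : X) {h : ℝ} (hpos : 0 < h) :
    Metric.infDist (x + h • v) K / h ≤ Metric.infDist (x + h • w) K / h + dist v w := by
  have hdist : dist (x + h • v) (x + h • w) = h * dist v w := by
    rw [dist_add_left, dist_smul₀, Real.norm_of_nonneg hpos.le]
  rw [div_le_iff₀ hpos, add_mul, div_mul_cancel₀ _ hpos.ne', mul_comm (dist v w), ← hdist]
  exact Metric.infDist_le_infDist_add_dist

theorem isClosed_adjacentCone (K : Set X) (x : X) : IsClosed (adjacentCone K x) := by
  refine isClosed_of_closure_subset fun v hv => mem_adjacentCone_iff_eventually_lt.2 fun ε hε => ?_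
  obtain ⟨w, hw, hvw⟩ := Metric.mem_closure_iff.1 hv (ε / 2) (half_pos hε)
  filter_upwards [mem_adjacentCone_iff_eventually_lt.1 hw (ε / 2) (half_pos hε),
    self_mem_nhdsWithin] with h hh hpos
  linarith [infDist_add_smul_div_le K x v w hpos]

lemma mem_adjacentCone_of_eventually_mem (hv : ∀ᶠ h : ℝ in 𝓝[>] 0, x + h • v ∈ K) :
    v ∈ adjacentCone K x := by
  refine tendsto_nhds_of_eventually_eq (hv.mono fun h hh => ?_)
  rw [Metric.infDist_zero_of_mem hh, zero_div]

lemma adjacentCone_eq_univ_of_mem_nhds (hK : K ∈ 𝓝 x) : adjacentCone K x = univ :=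
  eq_univ_of_forall fun v =>
    mem_adjacentCone_of_eventually_mem ((tendsto_add_smul_nhdsGT_zero x v).eventually hK)

lemma exists_tendsto_of_mem_adjacentCone (hK : K.Nonempty) (hv : v ∈ adjacentCone K x) :
    ∃ w : ℝ → X, Tendsto w (𝓝[>] 0) (𝓝 v) ∧ ∀ h > 0, x + h • w h ∈ K := by
  -- The slack `h ^ 2 = o(h)` makes up for the distance to `K` possibly not being attained.
  have hnear : ∀ h : ℝ, 0 < h →
      ∃ z ∈ K, dist (x + h • v) z < Metric.infDist (x + h • v) K + h ^ 2 := fun h hpos =>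
    (Metric.infDist_lt_iff hK).1 (lt_add_of_pos_right _ (pow_pos hpos 2))
  choose! z hzK hz using hnear
  refine ⟨fun h => h⁻¹ • (z h - x), ?_, fun h hpos => ?_⟩
  · have hbound : Tendsto (fun h : ℝ => Metric.infDist (x + h • v) K / h + h) (𝓝[>] 0) (𝓝 0) := by
      simpa only [add_zero, id] using
        Tendsto.add hv (tendsto_nhdsWithin_of_tendsto_nhds tendsto_id)
    refine tendsto_iff_dist_tendsto_zero.2 <|
      squeeze_zero' (.of_forall fun _ => dist_nonneg) ?_ hbound
    filter_upwards [self_mem_nhdsWithin] with h (hpos : 0 < h)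
    have hdist : dist (h⁻¹ • (z h - x)) v = dist (x + h • v) (z h) / h := by
      rw [← inv_smul_smul₀ hpos.ne' v, dist_smul₀, Real.norm_of_nonneg (inv_nonneg.2 hpos.le),
        smul_inv_smul₀ hpos.ne', dist_comm, ← dist_add_left x, add_sub_cancel, div_eq_inv_mul]
    rw [hdist, div_add' _ _ _ hpos.ne', ← sq]
    gcongr
    exact (hz h hpos).le
  · simpa only [smul_inv_smul₀ hpos.ne', add_sub_cancel] using hzK h hpos

theorem adjacentCone_subset_posTangentConeAt (hK : K.Nonempty) :
    adjacentCone K x ⊆ posTangentConeAt K x := by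
  intro v hv
  obtain ⟨w, hwv, hwK⟩ := exists_tendsto_of_mem_adjacentCone hK hv
  refine mem_tangentConeAt_of_seq (𝓝[>] (0 : ℝ)) (fun h => h⁻¹.toNNReal) (fun h => h • w h) ?_
    (eventually_mem_nhdsWithin.mono hwK) (hwv.congr' ?_)
  · simpa only [id, zero_smul] using
      (tendsto_nhdsWithin_of_tendsto_nhds tendsto_id).smul hwv
  · filter_upwards [self_mem_nhdsWithin] with h (hpos : 0 < h)
    rw [NNReal.smul_def, Real.coe_toNNReal _ (inv_nonneg.2 hpos.le), inv_smul_smul₀ hpos.ne']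

end AdjacentCone

lemma eventually_lt_of_hasLineDerivAt_neg {X : Type*} [AddCommGroup X] [Module ℝ X] {f : X → ℝ}
    {f' : ℝ} {x v : X} (hf : HasLineDerivAt ℝ f f' x v) (hf' : f' < 0) :
    ∀ᶠ h : ℝ in 𝓝[>] 0, f (x + h • v) < f x := by
  filter_upwards [hf.tendsto_slope_zero_right.eventually_lt_const hf', self_mem_nhdsWithin]
    with h hslope (hpos : 0 < h)
  exact sub_neg.1 ((smul_neg_iff_of_pos_left (inv_pos.2 hpos)).1 hslope)

lemma surjective_pi_of_linearIndependent {ι F V : Type*} [Finite ι] [Field F] [AddCommGroup V]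
    [Module F V] {φ : ι → Module.Dual F V} (hφ : LinearIndependent F φ) :
    Function.Surjective (LinearMap.pi φ) := by
  classical
  have := Fintype.ofFinite ι
  rw [← LinearMap.dualMap_injective_iff, injective_iff_map_eq_zero]
  intro c hc
  have hsum : ∑ i, c (Pi.single i 1) • φ i = 0 := by
    rw [← hc]
    ext v
    rw [LinearMap.dualMap_apply, pi_eq_sum_univ' (LinearMap.pi φ v), map_sum]
    simp [mul_comm]
  ext i
  simpa using Fintype.linearIndependent_iff.1 hφ _ hsum i

lemma exists_forall_neg_of_linearIndependent {ι X : Type*} [Finite ι] [AddCommGroup X] [Module ℝ X]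
    [TopologicalSpace X] {φ : ι → StrongDual ℝ X} (hφ : LinearIndependent ℝ φ) :
    ∃ w, ∀ i, φ i w < 0 := by
  have hφ' : LinearIndependent ℝ fun i => (φ i : Module.Dual ℝ X) :=
    hφ.map' (ContinuousLinearMap.coeLM ℝ)
      (LinearMap.ker_eq_bot.2 ContinuousLinearMap.coe_injective)
  obtain ⟨w, hw⟩ := surjective_pi_of_linearIndependent hφ' fun _ => -1
  exact ⟨w, fun i => (congrFun hw i).trans_lt neg_one_lt_zero⟩

lemma linearIndependent_toDual {ι 𝕜 E : Type*} [RCLike 𝕜] [NormedAddCommGroup E]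
    [InnerProductSpace 𝕜 E] [CompleteSpace E] {f : ι → E} (hf : LinearIndependent 𝕜 f) :
    LinearIndependent 𝕜 fun i => InnerProductSpace.toDual 𝕜 E (f i) :=
  hf.map_of_surjective_injectiveₛ (starRingEnd 𝕜)
    (InnerProductSpace.toDual 𝕜 E : E →+ StrongDual 𝕜 E) (starRingEnd 𝕜).surjective
    (InnerProductSpace.toDual 𝕜 E).injective (InnerProductSpace.toDual 𝕜 E).map_smulₛₗ

section Constraints

/-- The linearized cone at `u` of the constraint set `{x | ∀ i, g i x ≤ 0}`, where `g' i` stands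
for the derivative of `g i` at `u`: the directions that increase no active constraint to first
order. Inactive constraints are ignored, so `g' i` is arbitrary for them. -/
def linearizedCone {ι X : Type*} [AddCommGroup X] [Module ℝ X] [TopologicalSpace X]
    (g : ι → X → ℝ) (g' : ι → StrongDual ℝ X) (u : X) : Set X :=
  {v | ∀ i, g i u = 0 → g' i v ≤ 0}

variable {ι X : Type*} [NormedAddCommGroup X] [NormedSpace ℝ X]
  {g : ι → X → ℝ} {g' : ι → StrongDual ℝ X} {u : X}

theorem adjacentCone_subset_linearizedCone (hu : ∀ i, g i u ≤ 0)
    (hg : ∀ i, g i u = 0 → HasFDerivWithinAt (g i) (g' i) {x | ∀ i, g i x ≤ 0} u) :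
    adjacentCone {x | ∀ i, g i x ≤ 0} u ⊆ linearizedCone g g' u := by
  intro v hv i hi
  have hmem : u ∈ {x | ∀ i, g i x ≤ 0} := hu
  have hmax : IsMaxOn (g i) {x | ∀ i, g i x ≤ 0} u := fun x hx => (hx i).trans hi.ge
  exact hmax.localize.hasFDerivWithinAt_nonpos (hg i hi)
    (adjacentCone_subset_posTangentConeAt (nonempty_of_mem hmem) hv)

variable [Finite ι]

lemma mem_adjacentCone_of_forall_neg (hu : ∀ i, g i u ≤ 0)
    (hg : ∀ i, g i u = 0 → HasFDerivAt (g i) (g' i) u)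
    (hcont : ∀ i, g i u < 0 → ContinuousAt (g i) u)
    {v : X} (hv : ∀ i, g i u = 0 → g' i v < 0) :
    v ∈ adjacentCone {x | ∀ i, g i x ≤ 0} u := by
  refine mem_adjacentCone_of_eventually_mem (eventually_all.2 fun i => ?_)
  rcases (hu i).lt_or_eq with hinactive | hactive
  · have hray := (hcont i hinactive).tendsto.comp (tendsto_add_smul_nhdsGT_zero u v)
    exact (hray.eventually_lt_const hinactive).mono fun _ => le_of_lt
  · have hline := (hg i hactive).hasLineDerivAt v
    exact (eventually_lt_of_hasLineDerivAt_neg hline (hv i hactive)).mono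
      fun _ hlt => (hlt.trans_eq hactive).le

theorem linearizedCone_subset_adjacentCone (hu : ∀ i, g i u ≤ 0)
    (hg : ∀ i, g i u = 0 → HasFDerivAt (g i) (g' i) u)
    (hcont : ∀ i, g i u < 0 → ContinuousAt (g i) u)
    (hMFCQ : ∃ w, ∀ i, g i u = 0 → g' i w < 0) :
    linearizedCone g g' u ⊆ adjacentCone {x | ∀ i, g i x ≤ 0} u := by
  intro v hv
  obtain ⟨w, hw⟩ := hMFCQ
  refine (isClosed_adjacentCone _ u).mem_of_tendsto (tendsto_add_smul_nhdsGT_zero v w) ?_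
  filter_upwards [self_mem_nhdsWithin] with ε (hε : 0 < ε)
  refine mem_adjacentCone_of_forall_neg hu hg hcont fun i hi => ?_
  rw [map_add, map_smul, smul_eq_mul]
  exact add_neg_of_nonpos_of_neg (hv i hi) (mul_neg_of_pos_of_neg hε (hw i hi))

theorem adjacentCone_eq_of_LICQ_general (hu : ∀ i, g i u ≤ 0)
    (hg : ∀ i, g i u = 0 → HasFDerivAt (g i) (g' i) u)
    (hcont : ∀ i, g i u < 0 → ContinuousAt (g i) u)
    (hLICQ : u ∈ frontier {x | ∀ i, g i x ≤ 0} →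
      LinearIndependent ℝ fun i : {i // g i u = 0} => g' i) :
    adjacentCone {x | ∀ i, g i x ≤ 0} u = linearizedCone g g' u := by
  refine (adjacentCone_subset_linearizedCone hu fun i hi => (hg i hi).hasFDerivWithinAt).antisymm ?_
  by_cases hint : u ∈ interior {x | ∀ i, g i x ≤ 0}
  · rw [adjacentCone_eq_univ_of_mem_nhds (mem_interior_iff_mem_nhds.1 hint)]
    exact subset_univ _
  · obtain ⟨w, hw⟩ := exists_forall_neg_of_linearIndependent (hLICQ ⟨subset_closure hu, hint⟩)
    exact linearizedCone_subset_adjacentCone hu hg hcont ⟨w, fun i hi => hw ⟨i, hi⟩⟩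

end Constraints

/-- Let `g^1, …, g^k : ℝ^l → ℝ` be `C¹`, `U := {u : g^i(u) ≤ 0 ∀ i}`, and assume the
LICQ holds at every boundary point of `U` (the active gradients are linearly
independent).  Then for every `u ∈ U`,
`T_U(u) = {v : ⟨∇g^i(u), v⟩ ≤ 0 for all i with g^i(u) = 0}`. -/
theorem adjacentCone_eq_of_LICQ {l k : ℕ}
    (g : Fin k → EuclideanSpace ℝ (Fin l) → ℝ)
    (hg : ∀ i, ContDiff ℝ 1 (g i))
    (U : Set (EuclideanSpace ℝ (Fin l)))
    (hU : U = {u | ∀ i, g i u ≤ 0})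
    (hLICQ : ∀ u ∈ frontier U,
      LinearIndependent ℝ (fun i : {i : Fin k // g i u = 0} => gradient (g i.1) u)) :
    ∀ u ∈ U, adjacentCone U u =
      {v : EuclideanSpace ℝ (Fin l) | ∀ i : Fin k, g i u = 0 → ⟪gradient (g i) u, v⟫ ≤ 0} := by
  subst hU
  exact fun u hu => adjacentCone_eq_of_LICQ_general hu
    (fun i _ => ((hg i).differentiable one_ne_zero u).hasGradientAt.hasFDerivAt)
    (fun i _ => (hg i).continuous.continuousAt) fun hfr => linearIndependent_toDual (hLICQ u hfr)
end

section
/- Let T > 0, (Ω, ℱ, P) a complete probability space with filtration 𝔽 = (ℱ_t)_{t∈[0,T]}, 𝒢 := {A ∈ ℬ([0,T])⊗ℱ : A_t ∈ ℱ_t for every t ∈ [0,T]}, and let ([0,T]×Ω, 𝒢*, μ*) be the completion of ([0,T]×Ω, 𝒢, λ×P), where λ is Lebesgue measure. Let U be a nonempty closed subset of R^l and 𝒰*_ad := {u : [0,T]×Ω → R^l : u is 𝒢*-measurable, u(t,ω) ∈ U for μ*-a.e. (t,ω), and ∫|u|² dμ* < ∞}. Then for every u ∈ 𝒰*_ad: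 (i) the set-valued map (t,ω) ↦ T_U(u(t,ω)) is 𝒢*-measurable; and (ii) 𝒯*_u ⊆ T_{𝒰*_ad}(u), where 𝒯*_u := {v ∈ ℒ²_𝔽(0,T;R^l) : v(t,ω) ∈ T_U(u(t,ω)) for μ*-a.e. (t,ω)}, ℒ²_𝔽(0,T;R^l) denotes the space of 𝒢*-measurable, μ*-square-integrable R^l-valued functions on [0,T]×Ω, and T_{𝒰*_ad}(u) is the adjacent cone of 𝒰*_ad at u in ℒ²_𝔽(0,T;R^l). -/
open MeasureTheory Filter Set
open scoped ENNReal

/-- The progressive σ-algebra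
`𝒢 := {A ∈ ℬ([0,T]) ⊗ ℱ : A_t ∈ ℱ_t for every t ∈ [0,T]}` on `[0,T] × Ω`. -/
def progSigma (T : ℝ) (Ω : Type*) [mΩ : MeasurableSpace Ω]
    (F : ℝ → MeasurableSpace Ω) : MeasurableSpace (Set.Icc (0 : ℝ) T × Ω) where
  MeasurableSet' A := MeasurableSet A ∧
    ∀ t : Set.Icc (0 : ℝ) T, MeasurableSet[F t.1] {ω : Ω | (t, ω) ∈ A}
  measurableSet_empty :=
    ⟨MeasurableSet.empty, fun t => by simp⟩
  measurableSet_compl := fun A hA =>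
    ⟨hA.1.compl, fun t => by
      have : {ω : Ω | (t, ω) ∈ Aᶜ} = {ω : Ω | (t, ω) ∈ A}ᶜ := rfl
      rw [this]; exact (hA.2 t).compl⟩
  measurableSet_iUnion := fun s hs =>
    ⟨MeasurableSet.iUnion fun n => (hs n).1, fun t => by
      have : {ω : Ω | (t, ω) ∈ ⋃ n, s n} = ⋃ n, {ω : Ω | (t, ω) ∈ s n} := by
        ext ω; simp
      rw [this]; exact MeasurableSet.iUnion fun n => (hs n).2 t⟩

lemma progSigma_le (T : ℝ) (Ω : Type*) [mΩ : MeasurableSpace Ω]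
    (F : ℝ → MeasurableSpace Ω) :
    progSigma T Ω F ≤ (inferInstance : MeasurableSpace (Set.Icc (0 : ℝ) T × Ω)) :=
  fun _ hA => hA.1

/-- Lebesgue measure on `[0, T]`, viewed as a subtype of `ℝ`. -/
noncomputable def lebIcc (T : ℝ) : Measure (Set.Icc (0 : ℝ) T) :=
  Measure.comap Subtype.val volume

/-- The measure `λ × P`, regarded as a measure on the progressive σ-algebra `𝒢`. -/
noncomputable def nuG (T : ℝ) (Ω : Type*) [mΩ : MeasurableSpace Ω]
    (F : ℝ → MeasurableSpace Ω) (P : Measure Ω) :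
    @Measure (Set.Icc (0 : ℝ) T × Ω) (progSigma T Ω F) :=
  ((lebIcc T).prod P).trim (progSigma_le T Ω F)

/-- The completion `𝒮*` of a σ-algebra `𝒮` under a measure `μ`: all sets `A` with
`E ⊆ A ⊆ F`, `E, F ∈ 𝒮` and `μ(F \ E) = 0`. -/
def completionSets {α : Type*} (m : MeasurableSpace α) (μ : @Measure α m) :
    Set (Set α) :=
  {A : Set α | ∃ E F : Set α, MeasurableSet[m] E ∧ MeasurableSet[m] F ∧
    E ⊆ A ∧ A ⊆ F ∧ μ (F \ E) = 0}

/-- A function on `[0,T] × Ω` is `𝒢*`-measurable if preimages of Borel sets belong to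
the completion `𝒢*` of `𝒢` under `λ × P`. -/
def starMeasurable (T : ℝ) (Ω : Type*) [mΩ : MeasurableSpace Ω]
    (F : ℝ → MeasurableSpace Ω) (P : Measure Ω) {l : ℕ}
    (u : Set.Icc (0 : ℝ) T × Ω → EuclideanSpace ℝ (Fin l)) : Prop :=
  ∀ B : Set (EuclideanSpace ℝ (Fin l)), MeasurableSet B →
    u ⁻¹' B ∈ completionSets (progSigma T Ω F) (nuG T Ω F P)

/-- The space `ℒ²_𝔽(0,T;ℝ^l)` of `𝒢*`-measurable, `μ*`-square-integrable functions. -/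
def L2Star (T : ℝ) (Ω : Type*) [mΩ : MeasurableSpace Ω]
    (F : ℝ → MeasurableSpace Ω) (P : Measure Ω) (l : ℕ) :
    Set (Set.Icc (0 : ℝ) T × Ω → EuclideanSpace ℝ (Fin l)) :=
  {v | starMeasurable T Ω F P v ∧ eLpNorm v 2 (nuG T Ω F P) < ⊤}

/-- The admissible set `𝒰*_ad := {u ∈ ℒ²_𝔽 : u(t,ω) ∈ U, μ*-a.e.}`. -/
def UadStar (T : ℝ) (Ω : Type*) [mΩ : MeasurableSpace Ω]
    (F : ℝ → MeasurableSpace Ω) (P : Measure Ω) {l : ℕ}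
    (U : Set (EuclideanSpace ℝ (Fin l))) :
    Set (Set.Icc (0 : ℝ) T × Ω → EuclideanSpace ℝ (Fin l)) :=
  {u ∈ L2Star T Ω F P l | ∀ᵐ p ∂(nuG T Ω F P), u p ∈ U}

/-- The adjacent cone, at `u`, of a subset `S` of a function space `W`, with respect
to the `L²(μ)`-distance: `{v ∈ W : lim_{h→0⁺} dist_{L²}(u + h v, S)/h = 0}`. -/
def adjacentConeL2 {α E : Type*} {mα : MeasurableSpace α} (μ : Measure α)
    [NormedAddCommGroup E] [NormedSpace ℝ E]
    (W S : Set (α → E)) (u : α → E) : Set (α → E) :=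
  {v ∈ W | Tendsto
    (fun h : ℝ =>
      (⨅ g ∈ S, eLpNorm (fun p => (u p + h • v p) - g p) 2 μ) / ENNReal.ofReal h)
    (nhdsWithin 0 (Set.Ioi 0)) (nhds 0)}

/-!
A function is measurable for the completed σ-algebra if and only if it is a.e. measurable for
`λ × P` on the progressive one, so the theorem is about a.e. measurable functions on an arbitrary
measure space.

Measurability of `p ↦ T_U(u p)`: the graph of `x ↦ T_U(x)` is Borel, hence for a Borel set `A` the
set of all `x` such that `T_U(x)` meets `A` is a projection of a Borel set, i.e. analytic. Analytic
sets are null measurable for every s-finite measure, in particular for the law of `u`: in a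
continuous image of `ℕ → ℕ` one can bound the coordinates one after the other, at an arbitrarily
small loss of measure, and what remains in the end is a compact subset.

Inclusion of cones: `π ∘ (u + h v)` is admissible for a Borel map `π` onto `U` with
`dist x (π x) ≤ 2 dist(x, U)`, so the `L²` distance from `u + h v` to the admissible set is at most
twice the `L²` norm of `dist(u + h v, U)`. After division by `h` the latter tends to zero by
dominated convergence: pointwise because `v ∈ T_U(u)`, and with bound `‖v‖` because `u ∈ U`.
-/

section AnalyticSet

theorem exists_lt_measure_image_inter_le {α X : Type*} [MeasurableSpace X] {μ : Measure X}
    {f : α → X} {s : Set α} {c : ℝ≥0∞} (hc : c < μ (f '' s)) (g : α → ℕ) :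
    ∃ m, c < μ (f '' (s ∩ {x | g x ≤ m})) := by
  have hmono : Monotone fun m => f '' (s ∩ {x | g x ≤ m}) := fun a b hab =>
    image_mono (inter_subset_inter_right _ fun x (hx : g x ≤ a) => hx.trans hab)
  have hunion : f '' s = ⋃ m, f '' (s ∩ {x | g x ≤ m}) := by
    have huniv : ⋃ m, {x | g x ≤ m} = univ := eq_univ_of_forall fun x =>
      mem_iUnion.2 ⟨g x, le_refl (g x)⟩
    rw [← image_iUnion, ← inter_iUnion, huniv, inter_univ]
  rwa [hunion, hmono.measure_iUnion, lt_iSup_iff] at hc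

/-- The sequences whose first `k` terms are bounded by those of `n`. For fixed `n` these sets
decrease to the compact set `Iic n` of the Baire space. -/
def initialBox (n : ℕ → ℕ) (k : ℕ) : Set (ℕ → ℕ) :=
  {x | ∀ i < k, x i ≤ n i}

theorem initialBox_zero (n : ℕ → ℕ) : initialBox n 0 = univ :=
  eq_univ_of_forall fun _ _ hi => absurd hi (Nat.not_lt_zero _)

theorem initialBox_succ (n : ℕ → ℕ) (k : ℕ) :
    initialBox n (k + 1) = initialBox n k ∩ {x | x k ≤ n k} := by
  ext x
  exact Nat.forall_lt_succ_right

theorem exists_forall_lt_measure_image_initialBox {X : Type*} [MeasurableSpace X] {μ : Measure X}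
    {f : (ℕ → ℕ) → X} {c : ℝ≥0∞} (hc : c < μ (range f)) :
    ∃ n, ∀ k, c < μ (f '' initialBox n k) := by
  choose! m hm using fun (s : Set (ℕ → ℕ)) (k : ℕ) (hs : c < μ (f '' s)) =>
    exists_lt_measure_image_inter_le hs (fun x => x k)
  let D : ℕ → Set (ℕ → ℕ) := Nat.rec univ fun k s => s ∩ {x | x k ≤ m s k}
  have hD (k : ℕ) : initialBox (fun k => m (D k) k) k = D k := by
    induction k with
    | zero => exact initialBox_zero _
    | succ k ih => rw [initialBox_succ, ih]
  refine ⟨fun k => m (D k) k, fun k => hD k ▸ ?_⟩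
  induction k with
  | zero => simpa [D] using hc
  | succ k ih => exact hm (D k) k ih

theorem exists_forall_cylinder_subset_of_isCompact {E : ℕ → Type*} [∀ i, TopologicalSpace (E i)]
    [∀ i, DiscreteTopology (E i)] {K V : Set (∀ i, E i)} (hK : IsCompact K) (hV : IsOpen V)
    (hKV : K ⊆ V) : ∃ k, ∀ x ∈ K, PiNat.cylinder x k ⊆ V := by
  refine hK.induction_on (p := fun s => ∃ k, ∀ x ∈ s, PiNat.cylinder x k ⊆ V) ⟨0, by simp⟩
    (fun s t hst ⟨k, hk⟩ => ⟨k, fun x hx => hk x (hst hx)⟩) ?_ ?_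
  · rintro s t ⟨k, hk⟩ ⟨l, hl⟩
    refine ⟨max k l, fun x hx => hx.elim (fun hs => ?_) fun ht => ?_⟩
    · exact (PiNat.cylinder_anti x (le_max_left k l)).trans (hk x hs)
    · exact (PiNat.cylinder_anti x (le_max_right k l)).trans (hl x ht)
  · intro x hx
    obtain ⟨_, ⟨y, k, rfl⟩, hxy, hyV⟩ :=
      (PiNat.isTopologicalBasis_cylinders E).exists_subset_of_mem_open (hKV hx) hV
    refine ⟨_, mem_nhdsWithin_of_mem_nhds ((PiNat.isOpen_cylinder E y k).mem_nhds hxy), k, ?_⟩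
    intro z hz
    rwa [PiNat.mem_cylinder_iff_eq.1 hz]

theorem exists_initialBox_subset {n : ℕ → ℕ} {V : Set (ℕ → ℕ)} (hV : IsOpen V) (hn : Iic n ⊆ V) :
    ∃ k, initialBox n k ⊆ V := by
  have hK : IsCompact (Iic n) := Icc_bot (a := n) ▸ isCompact_Icc
  obtain ⟨k, hk⟩ := exists_forall_cylinder_subset_of_isCompact hK hV hn
  refine ⟨k, fun x hx => hk (x ⊓ n) (mem_Iic.2 inf_le_right) fun i hi => ?_⟩
  exact (min_eq_left (hx i hi)).symm

theorem exists_isCompact_subset_range_le_measure {X : Type*} [TopologicalSpace X]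
    [MeasurableSpace X] {μ : Measure X} [μ.OuterRegular] {f : (ℕ → ℕ) → X} (hf : Continuous f)
    {c : ℝ≥0∞} (hc : c < μ (range f)) :
    ∃ K ⊆ range f, IsCompact K ∧ c ≤ μ K := by
  obtain ⟨n, hn⟩ := exists_forall_lt_measure_image_initialBox hc
  have hK : IsCompact (Iic n) := Icc_bot (a := n) ▸ isCompact_Icc
  refine ⟨f '' Iic n, image_subset_range _ _, hK.image hf, ?_⟩
  rw [(f '' Iic n).measure_eq_iInf_isOpen]
  refine le_iInf₂ fun V hV => le_iInf fun hVo => ?_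
  obtain ⟨k, hk⟩ := exists_initialBox_subset (hVo.preimage hf) (image_subset_iff.1 hV)
  exact (hn k).le.trans (measure_mono (image_subset_iff.2 hk))

theorem nullMeasurableSet_of_forall_lt_exists_subset {X : Type*} [MeasurableSpace X]
    {μ : Measure X} {s : Set X} (hs : μ s ≠ ∞)
    (h : ∀ c < μ s, ∃ t ⊆ s, MeasurableSet t ∧ c ≤ μ t) : NullMeasurableSet s μ := by
  rcases eq_or_ne (μ s) 0 with h0 | h0
  · exact NullMeasurableSet.of_null h0
  obtain ⟨c, -, hc, hlim⟩ := exists_seq_strictMono_tendsto' (pos_iff_ne_zero.2 h0)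
  choose t hts htm hct using fun n => h (c n) (hc n).2
  have hm : MeasurableSet (⋃ n, t n) := .iUnion htm
  have hle : μ s ≤ μ (⋃ n, t n) :=
    le_of_tendsto' hlim fun n => (hct n).trans (measure_mono (subset_iUnion t n))
  exact hm.nullMeasurableSet.congr
    (ae_eq_of_subset_of_measure_ge (iUnion_subset hts) hle hm.nullMeasurableSet hs)

theorem nullMeasurableSet_of_analyticSet {X : Type*} [TopologicalSpace X]
    [TopologicalSpace.MetrizableSpace X] [MeasurableSpace X] [BorelSpace X] {s : Set X}
    (hs : AnalyticSet s) (μ : Measure X) [SFinite μ] : NullMeasurableSet s μ := by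
  suffices NullMeasurableSet s μ.toFinite from this.mono_ac (absolutelyContinuous_toFinite μ)
  refine nullMeasurableSet_of_forall_lt_exists_subset (measure_ne_top _ _) fun c hc => ?_
  rw [AnalyticSet] at hs
  obtain rfl | ⟨f, hf, rfl⟩ := hs
  · simp at hc
  obtain ⟨K, hKs, hK, hcK⟩ := exists_isCompact_subset_range_le_measure hf hc
  exact ⟨K, hKs, hK.measurableSet, hcK⟩

theorem nullMeasurableSet_preimage_of_analyticSet {α X : Type*} {_ : MeasurableSpace α}
    {μ : Measure α} [SFinite μ] [TopologicalSpace X] [TopologicalSpace.MetrizableSpace X]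
    [MeasurableSpace X] [BorelSpace X] {f : α → X} (hf : AEMeasurable f μ) {s : Set X}
    (hs : AnalyticSet s) : NullMeasurableSet (f ⁻¹' s) μ := by
  have hmk := (nullMeasurableSet_of_analyticSet hs (μ.map (hf.mk f))).preimage
    (hf.measurable_mk.quasiMeasurePreserving μ)
  exact hmk.congr (hf.ae_eq_mk.symm.preimage s)

end AnalyticSet

section AdjacentCone

theorem measurableSet_tendsto_of_continuous {ι X Y : Type*} [TopologicalSpace X]
    [MeasurableSpace X] [OpensMeasurableSpace X] [PseudoMetricSpace Y] {l : Filter ι}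
    [l.IsCountablyGenerated] {f : ι → X → Y} (hf : ∀ i, Continuous (f i)) (y : Y) :
    MeasurableSet {x | Tendsto (fun i => f i x) l (nhds y)} := by
  obtain ⟨b, hb⟩ := l.exists_antitone_basis
  have hset : {x | Tendsto (fun i => f i x) l (nhds y)} =
      ⋂ n : ℕ, ⋃ m, ⋂ i ∈ b m, f i ⁻¹' Metric.closedBall y (1 / (n + 1)) := by
    ext x
    simp only [hb.tendsto_iff Metric.nhds_basis_closedBall_inv_nat_succ, mem_ofPred_eq, mem_iInter,
      mem_iUnion, mem_preimage, true_and, forall_const]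
  rw [hset]
  exact .iInter fun n => .iUnion fun m => IsClosed.measurableSet <|
    isClosed_biInter fun i _ => Metric.isClosed_closedBall.preimage (hf i)

variable {E : Type*} [NormedAddCommGroup E] [NormedSpace ℝ E] [SecondCountableTopology E]
  [MeasurableSpace E] [BorelSpace E]

theorem measurableSet_graph_adjacentCone (U : Set E) :
    MeasurableSet {q : E × E | q.2 ∈ adjacentCone U q.1} :=
  measurableSet_tendsto_of_continuous
    (fun h => ((Metric.continuous_infDist_pt U).comp (by fun_prop)).div_const h) 0

theorem nullMeasurableSet_adjacentCone_inter_nonempty [CompleteSpace E] {α : Type*}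
    {_ : MeasurableSpace α} {μ : Measure α} [SFinite μ] (U : Set E) {u : α → E}
    (hu : AEMeasurable u μ) {A : Set E} (hA : MeasurableSet A) :
    NullMeasurableSet {a | (adjacentCone U (u a) ∩ A).Nonempty} μ := by
  have hproj : AnalyticSet {x | (adjacentCone U x ∩ A).Nonempty} := by
    convert ((measurableSet_graph_adjacentCone U).inter
      (measurable_snd hA)).analyticSet_image measurable_fst using 1
    ext x
    simp [Set.Nonempty]
  exact nullMeasurableSet_preimage_of_analyticSet hu hproj

end AdjacentCone

section Distance

theorem exists_measurable_forall_dist_le_mul_infDist {X : Type*} [PseudoMetricSpace X]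
    [SecondCountableTopology X] [MeasurableSpace X] [OpensMeasurableSpace X] {U : Set X}
    (hUcl : IsClosed U) (hUne : U.Nonempty) {c : ℝ} (hc : 1 < c) :
    ∃ π : X → X, Measurable π ∧ ∀ x, π x ∈ U ∧ dist x (π x) ≤ c * Metric.infDist x U := by
  classical
  have : Nonempty U := hUne.to_subtype
  let d : ℕ → U := TopologicalSpace.denseSeq U
  have hnear (x : X) : ∃ n, x ∈ U ∨ dist x (d n) < c * Metric.infDist x U := by
    by_cases hx : x ∈ U
    · exact ⟨0, .inl hx⟩
    have hpos : 0 < Metric.infDist x U := (hUcl.notMem_iff_infDist_pos hUne).1 hx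
    obtain ⟨y, hyU, hxy⟩ := (Metric.infDist_lt_iff hUne).1 (lt_mul_of_one_lt_left hpos hc)
    have hopen : IsOpen {z : U | dist x z < c * Metric.infDist x U} :=
      isOpen_lt (by fun_prop) continuous_const
    obtain ⟨n, hn⟩ := (TopologicalSpace.denseRange_denseSeq U).exists_mem_open hopen ⟨⟨y, hyU⟩, hxy⟩
    exact ⟨n, .inr hn⟩
  have hfind : Measurable fun x => Nat.find (hnear x) := measurable_find hnear fun n =>
    hUcl.measurableSet.union (isOpen_lt (by fun_prop)
      ((Metric.continuous_infDist_pt U).const_mul c)).measurableSet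
  refine ⟨fun x => if x ∈ U then x else d (Nat.find (hnear x)), ?_, fun x => ?_⟩
  · exact measurable_id.ite hUcl.measurableSet
      ((measurable_from_nat (f := fun n => (d n : X))).comp hfind)
  · dsimp only
    split_ifs with hx
    · simp [hx, Metric.infDist_zero_of_mem]
    · exact ⟨(d _).2, ((Nat.find_spec (hnear x)).resolve_left hx).le⟩

theorem infDist_add_le_norm {E : Type*} [SeminormedAddCommGroup E] {U : Set E} {x : E}
    (hx : x ∈ U) (w : E) : Metric.infDist (x + w) U ≤ ‖w‖ := by
  simpa using Metric.infDist_le_dist_of_mem (x := x + w) hx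

end Distance

section Lp

variable {α : Type*} {mα : MeasurableSpace α} {μ : Measure α} {p : ℝ≥0∞}

theorem tendsto_eLpNorm_zero_of_dominated {ι G : Type*} [NormedAddCommGroup G] {l : Filter ι}
    [l.IsCountablyGenerated] {f : ι → α → G} {bound : α → ℝ} (hp : p ≠ ∞)
    (hf : ∀ᶠ i in l, AEStronglyMeasurable (f i) μ) (hbound : MemLp bound p μ)
    (hle : ∀ᶠ i in l, ∀ᵐ a ∂μ, ‖f i a‖ ≤ bound a)
    (hlim : ∀ᵐ a ∂μ, Tendsto (fun i => f i a) l (nhds 0)) :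
    Tendsto (fun i => eLpNorm (f i) p μ) l (nhds 0) := by
  rcases eq_or_ne p 0 with rfl | hp0
  · simpa using tendsto_const_nhds
  have hr : 0 < p.toReal := ENNReal.toReal_pos hp0 hp
  have hlintegral : Tendsto (fun i => ∫⁻ a, ‖f i a‖ₑ ^ p.toReal ∂μ) l (nhds (∫⁻ _, 0 ∂μ)) := by
    refine tendsto_lintegral_filter_of_dominated_convergence' (fun a => ‖bound a‖ₑ ^ p.toReal)
      (hf.mono fun i hi => hi.enorm.pow_const _) ?_
      (lintegral_rpow_enorm_lt_top_of_eLpNorm_lt_top hp0 hp hbound.2).ne ?_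
    · filter_upwards [hle] with i hi
      filter_upwards [hi] with a ha
      gcongr
      exact enorm_le_iff_norm_le.2 (ha.trans (le_abs_self _))
    · filter_upwards [hlim] with a ha
      simpa [hr] using ha.enorm.ennrpow_const p.toReal
  simpa [eLpNorm_eq_lintegral_rpow_enorm_toReal hp0 hp, hr]
    using hlintegral.ennrpow_const (1 / p.toReal)

theorem eLpNorm_div_const_of_pos (f : α → ℝ) {h : ℝ} (hh : 0 < h) :
    eLpNorm (fun a => f a / h) p μ = eLpNorm f p μ / ENNReal.ofReal h := by
  calc eLpNorm (fun a => f a / h) p μ = eLpNorm (h⁻¹ • f) p μ := by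
        simp only [div_eq_inv_mul, ← smul_eq_mul, ← Pi.smul_def]
    _ = ‖h⁻¹‖ₑ * eLpNorm f p μ := eLpNorm_const_smul h⁻¹ f p μ
    _ = eLpNorm f p μ / ENNReal.ofReal h := by
        rw [enorm_inv hh.ne', Real.enorm_of_nonneg hh.le, ENNReal.div_eq_inv_mul]

variable {E : Type*} [NormedAddCommGroup E] {U : Set E}

theorem exists_memLp_forall_mem_eLpNorm_sub_le [SecondCountableTopology E] [MeasurableSpace E]
    [BorelSpace E] (hUcl : IsClosed U) (hUne : U.Nonempty) {w : α → E} (hw : MemLp w p μ)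
    (hwU : MemLp (fun a => Metric.infDist (w a) U) p μ) {c : ℝ} (hc : 1 < c) :
    ∃ g : α → E, MemLp g p μ ∧ (∀ a, g a ∈ U) ∧
      eLpNorm (fun a => w a - g a) p μ ≤
        ENNReal.ofReal c * eLpNorm (fun a => Metric.infDist (w a) U) p μ := by
  obtain ⟨π, hπ, hπU⟩ := exists_measurable_forall_dist_le_mul_infDist hUcl hUne hc
  have hle : ∀ᵐ a ∂μ, ‖w a - π (w a)‖ ≤ c * ‖Metric.infDist (w a) U‖ := .of_forall fun a => by
    rw [← dist_eq_norm, Real.norm_of_nonneg Metric.infDist_nonneg]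
    exact (hπU (w a)).2
  have hπw : AEStronglyMeasurable (fun a => π (w a)) μ :=
    (hπ.comp_aemeasurable hw.aestronglyMeasurable.aemeasurable).aestronglyMeasurable
  have hsub : MemLp (fun a => w a - π (w a)) p μ :=
    hwU.of_le_mul (hw.aestronglyMeasurable.sub hπw) hle
  refine ⟨fun a => π (w a), ?_, fun a => (hπU (w a)).1,
    eLpNorm_le_mul_eLpNorm_of_ae_le_mul hle p⟩
  simpa [Pi.sub_def] using hw.sub hsub

theorem memLp_infDist_add {u w : α → E} (hu : AEStronglyMeasurable u μ)
    (huU : ∀ᵐ a ∂μ, u a ∈ U) (hw : MemLp w p μ) :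
    MemLp (fun a => Metric.infDist (u a + w a) U) p μ := by
  refine hw.of_le ((Metric.continuous_infDist_pt U).comp_aestronglyMeasurable
    (hu.add hw.aestronglyMeasurable)) ?_
  filter_upwards [huU] with a ha
  rw [Real.norm_of_nonneg Metric.infDist_nonneg]
  exact infDist_add_le_norm ha (w a)

variable [NormedSpace ℝ E] {u : α → E}

theorem tendsto_eLpNorm_infDist_add_smul_div {v : α → E} (hp : p ≠ ∞)
    (hu : AEStronglyMeasurable u μ) (huU : ∀ᵐ a ∂μ, u a ∈ U) (hv : MemLp v p μ)
    (hvU : ∀ᵐ a ∂μ, v a ∈ adjacentCone U (u a)) :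
    Tendsto (fun h : ℝ => eLpNorm (fun a => Metric.infDist (u a + h • v a) U / h) p μ)
      (nhdsWithin 0 (Ioi 0)) (nhds 0) := by
  refine tendsto_eLpNorm_zero_of_dominated hp (.of_forall fun h => ?_) hv.norm ?_ hvU
  · simp only [div_eq_mul_inv]
    exact (memLp_infDist_add hu huU (hv.const_smul h)).aestronglyMeasurable.mul_const h⁻¹
  · filter_upwards [self_mem_nhdsWithin] with h (hh : 0 < h)
    filter_upwards [huU] with a ha
    rw [Real.norm_of_nonneg (div_nonneg Metric.infDist_nonneg hh.le), div_le_iff₀' hh]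
    simpa [norm_smul, abs_of_pos hh] using infDist_add_le_norm ha (h • v a)

variable [SecondCountableTopology E] [MeasurableSpace E] [BorelSpace E]

theorem setOf_ae_mem_adjacentCone_subset_adjacentConeL2 (hUcl : IsClosed U) (hUne : U.Nonempty)
    (hu : MemLp u 2 μ) (huU : ∀ᵐ a ∂μ, u a ∈ U) :
    {v | MemLp v 2 μ ∧ ∀ᵐ a ∂μ, v a ∈ adjacentCone U (u a)} ⊆
      adjacentConeL2 μ {v | MemLp v 2 μ} {g | MemLp g 2 μ ∧ ∀ᵐ a ∂μ, g a ∈ U} u := by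
  rintro v ⟨hv, hvU⟩
  have hlim := ENNReal.Tendsto.const_mul (a := ENNReal.ofReal 2)
    (tendsto_eLpNorm_infDist_add_smul_div ENNReal.ofNat_ne_top hu.aestronglyMeasurable huU hv hvU)
    (.inr ENNReal.ofReal_ne_top)
  rw [mul_zero] at hlim
  refine ⟨hv, tendsto_of_tendsto_of_tendsto_of_le_of_le' tendsto_const_nhds hlim
    (.of_forall fun _ => zero_le) ?_⟩
  filter_upwards [self_mem_nhdsWithin] with h (hh : 0 < h)
  have hhv : MemLp (fun a => h • v a) 2 μ := hv.const_smul h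
  obtain ⟨g, hg, hgU, hle⟩ := exists_memLp_forall_mem_eLpNorm_sub_le hUcl hUne (hu.add hhv)
    (memLp_infDist_add hu.aestronglyMeasurable huU hhv) one_lt_two
  rw [eLpNorm_div_const_of_pos _ hh, ← mul_div_assoc]
  gcongr
  exact (iInf₂_le g ⟨hg, .of_forall hgU⟩).trans hle

end Lp

section Completion

theorem mem_completionSets_iff {α : Type*} {m : MeasurableSpace α} {μ : Measure α} {A : Set α} :
    A ∈ completionSets m μ ↔ NullMeasurableSet A μ := by
  constructor
  · rintro ⟨B, C, hB, -, hBA, hAC, h0⟩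
    refine hB.nullMeasurableSet.congr (hBA.eventuallyLE.antisymm ?_)
    exact ae_le_set.2 (measure_mono_null (sdiff_subset_sdiff_left hAC) h0)
  · intro hA
    obtain ⟨B, hBA, hB, hBe⟩ := hA.exists_measurable_subset_ae_eq
    obtain ⟨C, hAC, hC, hCe⟩ := hA.exists_measurable_superset_ae_eq
    exact ⟨B, C, hB, hC, hBA, hAC, ae_le_set.1 (hCe.trans hBe.symm).le⟩

variable {T : ℝ} {Ω : Type*} [MeasurableSpace Ω] {F : ℝ → MeasurableSpace Ω} {P : Measure Ω}
  {l : ℕ}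

theorem starMeasurable_iff_aemeasurable {u : Set.Icc (0 : ℝ) T × Ω → EuclideanSpace ℝ (Fin l)} :
    starMeasurable T Ω F P u ↔ AEMeasurable[progSigma T Ω F] u (nuG T Ω F P) := by
  refine ⟨fun hu => ?_, fun hu B hB => mem_completionSets_iff.2 (hu.nullMeasurable hB)⟩
  have hnull : @NullMeasurable _ _ (progSigma T Ω F) _ u (nuG T Ω F P) := fun B hB =>
    mem_completionSets_iff.1 (hu B hB)
  exact hnull.aemeasurable

theorem L2Star_eq_setOf_memLp :
    L2Star T Ω F P l = {v | MemLp v 2 (nuG T Ω F P)} := by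
  ext v
  exact and_congr_left'
    (starMeasurable_iff_aemeasurable.trans aestronglyMeasurable_iff_aemeasurable.symm)

theorem isFiniteMeasure_lebIcc (T : ℝ) : IsFiniteMeasure (lebIcc T) := by
  refine ⟨?_⟩
  rw [lebIcc, comap_subtype_coe_apply measurableSet_Icc, image_univ, Subtype.range_coe]
  exact measure_Icc_lt_top

theorem isFiniteMeasure_nuG [IsFiniteMeasure P] : IsFiniteMeasure (nuG T Ω F P) :=
  have := isFiniteMeasure_lebIcc T
  isFiniteMeasure_trim (progSigma_le T Ω F)

end Completion

theorem adjacentCone_star_measurable_and_subset_general {α E : Type*} {_ : MeasurableSpace α}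
    {μ : Measure α} [SFinite μ] [NormedAddCommGroup E] [NormedSpace ℝ E] [CompleteSpace E]
    [SecondCountableTopology E] [MeasurableSpace E] [BorelSpace E] {U : Set E}
    (hUcl : IsClosed U) (hUne : U.Nonempty) {u : α → E} (hu : MemLp u 2 μ)
    (huU : ∀ᵐ a ∂μ, u a ∈ U) :
    (∀ A : Set E, MeasurableSet A →
        NullMeasurableSet {a | (adjacentCone U (u a) ∩ A).Nonempty} μ) ∧
      {v | MemLp v 2 μ ∧ ∀ᵐ a ∂μ, v a ∈ adjacentCone U (u a)} ⊆
        adjacentConeL2 μ {v | MemLp v 2 μ} {g | MemLp g 2 μ ∧ ∀ᵐ a ∂μ, g a ∈ U} u :=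
  ⟨fun _ hA => nullMeasurableSet_adjacentCone_inter_nonempty U
      hu.aestronglyMeasurable.aemeasurable hA,
    setOf_ae_mem_adjacentCone_subset_adjacentConeL2 hUcl hUne hu huU⟩

/-- For every `u ∈ 𝒰*_ad`: (i) the set-valued map `(t,ω) ↦ T_U(u(t,ω))` is
`𝒢*`-measurable; (ii) `𝒯*_u := {v ∈ ℒ²_𝔽 : v(t,ω) ∈ T_U(u(t,ω)) μ*-a.e.}` is
contained in the adjacent cone `T_{𝒰*_ad}(u)` of `𝒰*_ad` at `u` in `ℒ²_𝔽`. -/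
theorem adjacentCone_star_measurable_and_subset
    (T : ℝ) (hT : 0 < T) {Ω : Type*} [mΩ : MeasurableSpace Ω]
    (P : Measure Ω) [IsProbabilityMeasure P] (hPc : P.IsComplete)
    (F : ℝ → MeasurableSpace Ω)
    (hFle : ∀ t : ℝ, F t ≤ mΩ)
    (hFmono : ∀ s t : ℝ, s ≤ t → F s ≤ F t)
    {l : ℕ} (U : Set (EuclideanSpace ℝ (Fin l))) (hUcl : IsClosed U)
    (hUne : U.Nonempty)
    (u : Set.Icc (0 : ℝ) T × Ω → EuclideanSpace ℝ (Fin l))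
    (hu : u ∈ UadStar T Ω F P U) :
    (∀ A : Set (EuclideanSpace ℝ (Fin l)), MeasurableSet A →
        {p : Set.Icc (0 : ℝ) T × Ω | (adjacentCone U (u p) ∩ A).Nonempty} ∈
          completionSets (progSigma T Ω F) (nuG T Ω F P)) ∧
      {v ∈ L2Star T Ω F P l | ∀ᵐ p ∂(nuG T Ω F P), v p ∈ adjacentCone U (u p)} ⊆
        adjacentConeL2 (nuG T Ω F P) (L2Star T Ω F P l) (UadStar T Ω F P U) u := by
  have := isFiniteMeasure_nuG (T := T) (F := F) (P := P)
  rw [UadStar, L2Star_eq_setOf_memLp] at hu ⊢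
  simp only [mem_completionSets_iff]
  exact adjacentCone_star_measurable_and_subset_general hUcl hUne hu.1 hu.2
end
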